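/- Let h:[a,b]→[0,∞) be a non-negative concave function with positive integral, and let α,β>0 with α≤β. Define g_α(h) = (∫_a^b t·h(t)^α dt)/(∫_a^b h(t)^α dt). Then (∫_{g_α(h)}^b h(t)^β dt)/(∫_a^b h(t)^β dt) ≥ ((α+1)/(α+2))^{β+1}. -/

import Mathlib

open Set MeasureTheory

theorem IntervalIntegrable.mono_of_le {f : ℝ → ℝ} {a b x y : ℝ}
    (hf : IntervalIntegrable f volume a b) (hax : a ≤ x) (hxy : x ≤ y) (hyb : y ≤ b) :
    IntervalIntegrable f volume x y :=
  hf.mono_set (by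
    rw [uIcc_of_le hxy, uIcc_of_le (hax.trans (hxy.trans hyb))]
    exact Icc_subset_Icc hax hyb)

theorem ConcaveOn.continuousOn_rpow_Ioo {a b p : ℝ} {h : ℝ → ℝ}
    (hconc : ConcaveOn ℝ (Icc a b) h) (hp : 0 ≤ p) :
    ContinuousOn (fun t => h t ^ p) (Ioo a b) :=
  ((hconc.subset Ioo_subset_Icc_self (convex_Ioo a b)).continuousOn isOpen_Ioo).rpow_const
    fun _ _ => Or.inr hp

theorem ConcaveOn.intervalIntegrable_rpow {a b p : ℝ} {h : ℝ → ℝ} (hab : a ≤ b)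
    (hconc : ConcaveOn ℝ (Icc a b) h) (hnn : ∀ t ∈ Icc a b, 0 ≤ h t) (hp : 0 ≤ p) :
    IntervalIntegrable (fun t => h t ^ p) volume a b := by
  rw [intervalIntegrable_iff_integrableOn_Ioo_of_le hab]
  refine IntegrableOn.of_bound (C := (2 * h ((a + b) / 2)) ^ p) (by simp)
    ((hconc.continuousOn_rpow_Ioo hp).aestronglyMeasurable measurableSet_Ioo) ?_
  filter_upwards [ae_restrict_mem measurableSet_Ioo] with t ht
  have ht' : t ∈ Icc a b := Ioo_subset_Icc_self ht
  have hr : a + b - t ∈ Icc a b := ⟨by linarith [ht.2], by linarith [ht.1]⟩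
  have hmid := hconc.2 ht' hr (by norm_num : (0 : ℝ) ≤ 1 / 2) (by norm_num : (0 : ℝ) ≤ 1 / 2)
    (by norm_num)
  simp only [smul_eq_mul] at hmid
  rw [show 1 / 2 * t + 1 / 2 * (a + b - t) = (a + b) / 2 by ring] at hmid
  rw [Real.norm_of_nonneg (Real.rpow_nonneg (hnn t ht') p)]
  exact Real.rpow_le_rpow (hnn t ht') (by linarith [hnn _ hr]) hp

theorem ConcaveOn.pos_of_integral_pos {a b : ℝ} {h : ℝ → ℝ} (hab : a < b)
    (hconc : ConcaveOn ℝ (Icc a b) h) (hnn : ∀ t ∈ Icc a b, 0 ≤ h t)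
    (hint : 0 < ∫ t in a..b, h t) : ∀ t ∈ Ioo a b, 0 < h t := by
  obtain ⟨u, hu, hupos⟩ : ∃ u ∈ Icc a b, 0 < h u := by
    by_contra! hcon
    have hzero : ∫ t in a..b, h t = ∫ t in a..b, (0 : ℝ) :=
      intervalIntegral.integral_congr fun t ht => by
        rw [uIcc_of_le hab.le] at ht
        exact le_antisymm (hcon t ht) (hnn t ht)
    simp [hzero] at hint
  intro t ht
  rcases lt_trichotomy t u with htu | rfl | htu
  · have := hconc.slope_anti_adjacent (left_mem_Icc.2 hab.le) hu ht.1 htu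
    have ha := hnn a (left_mem_Icc.2 hab.le)
    rw [div_le_div_iff₀ (sub_pos.2 htu) (sub_pos.2 ht.1)] at this
    by_contra! hcon
    nlinarith [mul_pos hupos (sub_pos.2 ht.1), mul_nonneg ha (sub_nonneg.2 htu.le),
      mul_nonneg (neg_nonneg.2 hcon) (sub_nonneg.2 htu.le),
      mul_nonneg (neg_nonneg.2 hcon) (sub_nonneg.2 ht.1.le)]
  · exact hupos
  · have := hconc.slope_anti_adjacent hu (right_mem_Icc.2 hab.le) htu ht.2
    have hb := hnn b (right_mem_Icc.2 hab.le)
    rw [div_le_div_iff₀ (sub_pos.2 ht.2) (sub_pos.2 htu)] at this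
    by_contra! hcon
    nlinarith [mul_pos hupos (sub_pos.2 ht.2), mul_nonneg hb (sub_nonneg.2 htu.le),
      mul_nonneg (neg_nonneg.2 hcon) (sub_nonneg.2 htu.le),
      mul_nonneg (neg_nonneg.2 hcon) (sub_nonneg.2 ht.2.le)]

theorem integral_mul_sub_rpow {s e k p : ℝ} (hse : s ≤ e) (hk : 0 ≤ k) (hp : 0 < p) :
    ∫ t in s..e, (k * (e - t)) ^ p = k ^ p * (e - s) ^ (p + 1) / (p + 1) := by
  have h1 : ∫ t in s..e, (k * (e - t)) ^ p = ∫ t in s..e, k ^ p * (e - t) ^ p := by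
    refine intervalIntegral.integral_congr fun t ht => ?_
    rw [uIcc_of_le hse] at ht
    exact Real.mul_rpow hk (sub_nonneg.2 ht.2)
  rw [h1, intervalIntegral.integral_const_mul,
    intervalIntegral.integral_comp_sub_left (fun t => t ^ p), integral_rpow (Or.inl (by linarith)),
    sub_self, Real.zero_rpow (by linarith)]
  ring

theorem intervalIntegrable_mul_sub_rpow {k e p : ℝ} (hp : 0 ≤ p) (s t : ℝ) :
    IntervalIntegrable (fun u => (k * (e - u)) ^ p) volume s t :=
  (Continuous.rpow_const (by fun_prop) fun _ => Or.inr hp).intervalIntegrable s t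

theorem ConcaveOn.exists_crossing {a b k e : ℝ} {h : ℝ → ℝ} (hab : a ≤ b)
    (hconc : ConcaveOn ℝ (Icc a b) h) (hline : k * (e - a) ≤ h a) :
    ∃ c ∈ Icc a b, (∀ t ∈ Ico a c, k * (e - t) ≤ h t) ∧ ∀ t ∈ Ioc c b, h t ≤ k * (e - t) := by
  set S := {t ∈ Icc a b | k * (e - t) ≤ h t}
  have haS : a ∈ S := ⟨left_mem_Icc.2 hab, hline⟩
  have hbdd : BddAbove S := ⟨b, fun t ht => ht.1.2⟩
  refine ⟨sSup S, ⟨le_csSup hbdd haS, csSup_le ⟨a, haS⟩ fun t ht => ht.1.2⟩, ?_, ?_⟩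
  · intro t ht
    obtain ⟨s, hs, hts⟩ := exists_lt_of_lt_csSup ⟨a, haS⟩ ht.2
    have hconvS : ConcaveOn ℝ (Icc a b) fun t => h t - k * (e - t) :=
      hconc.sub ⟨convex_Icc a b, fun x _ y _ u v _ _ huv => by
        simp only [smul_eq_mul]
        exact le_of_eq (by linear_combination -k * e * huv)⟩
    have := hconvS.min_le_of_mem_Icc haS.1 hs.1 ⟨ht.1, hts.le⟩
    have h0 : 0 ≤ min (h a - k * (e - a)) (h s - k * (e - s)) :=
      le_min (by linarith) (by linarith [hs.2])
    linarith
  · intro t ht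
    by_contra! hcon
    exact ht.1.not_ge (le_csSup hbdd
      ⟨⟨(le_csSup hbdd haS).trans ht.1.le, ht.2⟩, hcon.le⟩)

theorem rpow_mul_le_integral {a b p : ℝ} {h : ℝ → ℝ} (hab : a < b)
    (hconc : ConcaveOn ℝ (Icc a b) h) (hnn : ∀ t ∈ Icc a b, 0 ≤ h t) (hp : 0 < p) :
    h a ^ p * (b - a) ≤ (p + 1) * ∫ t in a..b, h t ^ p := by
  have hba : 0 < b - a := sub_pos.2 hab
  have ha := hnn a (left_mem_Icc.2 hab.le)
  have hk : 0 ≤ h a / (b - a) := by positivity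
  have hle : ∫ t in a..b, (h a / (b - a) * (b - t)) ^ p ≤ ∫ t in a..b, h t ^ p := by
    refine intervalIntegral.integral_mono_on hab.le (intervalIntegrable_mul_sub_rpow hp.le _ _)
      (hconc.intervalIntegrable_rpow hab.le hnn hp.le) fun t ht => ?_
    refine Real.rpow_le_rpow (mul_nonneg hk (sub_nonneg.2 ht.2)) ?_ hp.le
    have := hconc.2 (left_mem_Icc.2 hab.le) (right_mem_Icc.2 hab.le)
      (div_nonneg (sub_nonneg.2 ht.2) hba.le) (div_nonneg (sub_nonneg.2 ht.1) hba.le)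
      (by field_simp; ring)
    simp only [smul_eq_mul] at this
    rw [show (b - t) / (b - a) * a + (t - a) / (b - a) * b = t by field_simp; ring] at this
    have hb := mul_nonneg (div_nonneg (sub_nonneg.2 ht.1) hba.le) (hnn b (right_mem_Icc.2 hab.le))
    calc h a / (b - a) * (b - t) = (b - t) / (b - a) * h a := by ring
      _ ≤ h t := by linarith
  rw [integral_mul_sub_rpow hab.le hk hp, Real.div_rpow ha hba.le, Real.rpow_add_one hba.ne',
    div_le_iff₀ (by linarith)] at hle
  have : (b - a) ^ p ≠ 0 := (Real.rpow_pos_of_pos hba p).ne'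
  calc h a ^ p * (b - a) = h a ^ p / (b - a) ^ p * ((b - a) ^ p * (b - a)) := by field_simp
    _ ≤ _ := by linarith

theorem hasDerivAt_rpow_sub_mul_rpow {α β c u : ℝ} (hu : 0 < u) :
    HasDerivAt (fun u : ℝ => u ^ α - c * u ^ β) (α * u ^ (α - 1) - c * (β * u ^ (β - 1))) u :=
  (Real.hasDerivAt_rpow_const (Or.inl hu.ne')).sub
    ((Real.hasDerivAt_rpow_const (Or.inl hu.ne')).const_mul c)

theorem deriv_rpow_factor {α β v u : ℝ} (hβ : 0 < β) (hv : 0 < v) (hu : 0 < u) :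
    α * u ^ (α - 1) - α / β * v ^ (α - β) * (β * u ^ (β - 1)) =
      α * u ^ (α - 1) * (1 - (u / v) ^ (β - α)) := by
  rw [Real.div_rpow hu.le hv.le, show β - 1 = (α - 1) + (β - α) by ring, Real.rpow_add hu,
    show α - β = -(β - α) by ring, Real.rpow_neg hv.le]
  field_simp

theorem monotoneOn_rpow_sub_mul_rpow {α β v : ℝ} (hα : 0 < α) (hαβ : α ≤ β) (hv : 0 < v) :
    MonotoneOn (fun u : ℝ => u ^ α - α / β * v ^ (α - β) * u ^ β) (Icc 0 v) := by
  have hβ := hα.trans_le hαβ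
  refine monotoneOn_of_hasDerivWithinAt_nonneg (convex_Icc 0 v) (Continuous.continuousOn
    ((Real.continuous_rpow_const hα.le).sub ((Real.continuous_rpow_const hβ.le).const_mul _)))
    (fun u hu => ?_) (fun u hu => ?_) (f' := fun u => α * u ^ (α - 1) * (1 - (u / v) ^ (β - α)))
  all_goals rw [interior_Icc] at hu
  · rw [← deriv_rpow_factor hβ hv hu.1]
    exact (hasDerivAt_rpow_sub_mul_rpow hu.1).hasDerivWithinAt
  · have := hu.1
    exact mul_nonneg (by positivity) (sub_nonneg.2
      (Real.rpow_le_one (by positivity) ((div_le_one hv).2 hu.2.le) (sub_nonneg.2 hαβ)))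

theorem antitoneOn_rpow_sub_mul_rpow {α β v : ℝ} (hα : 0 < α) (hαβ : α ≤ β) (hv : 0 < v) :
    AntitoneOn (fun u : ℝ => u ^ α - α / β * v ^ (α - β) * u ^ β) (Ici v) := by
  have hβ := hα.trans_le hαβ
  refine antitoneOn_of_hasDerivWithinAt_nonpos (convex_Ici v) (Continuous.continuousOn
    ((Real.continuous_rpow_const hα.le).sub ((Real.continuous_rpow_const hβ.le).const_mul _)))
    (fun u hu => ?_) (fun u hu => ?_) (f' := fun u => α * u ^ (α - 1) * (1 - (u / v) ^ (β - α)))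
  all_goals
    rw [interior_Ici] at hu
    have hu0 : 0 < u := hv.trans hu
  · rw [← deriv_rpow_factor hβ hv hu0]
    exact (hasDerivAt_rpow_sub_mul_rpow hu0).hasDerivWithinAt
  · exact mul_nonpos_of_nonneg_of_nonpos (by positivity) (sub_nonpos.2
      (Real.one_le_rpow ((one_le_div hv).2 (mem_Ioi.1 hu).le) (sub_nonneg.2 hαβ)))

theorem rpow_mul_integral_rpow_le {a b α β : ℝ} {h : ℝ → ℝ} (hab : a < b)
    (hconc : ConcaveOn ℝ (Icc a b) h) (hnn : ∀ t ∈ Icc a b, 0 ≤ h t) (ha : 0 < h a)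
    (hα : 0 < α) (hαβ : α ≤ β) :
    h a ^ β * ((α + 1) * ∫ t in a..b, h t ^ α) ≤ h a ^ α * ((β + 1) * ∫ t in a..b, h t ^ β) := by
  have hβ := hα.trans_le hαβ
  have hwα := Real.rpow_pos_of_pos ha α
  have hwβ := Real.rpow_pos_of_pos ha β
  rw [mul_comm, ← le_div_iff₀ hwβ, mul_div_assoc, mul_comm (h a ^ α), ← div_le_iff₀ hwα]
  refine le_of_forall_gt_imp_ge_of_dense fun E hE => ?_
  have hTβ := rpow_mul_le_integral hab hconc hnn hβ
  rw [mul_comm, ← le_div_iff₀ hwβ] at hTβ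
  have hbE : b - a < E := hTβ.trans_lt hE
  have hE0 : 0 < E := (sub_pos.2 hab).trans hbE
  obtain ⟨e, rfl⟩ : ∃ e, E = e - a := ⟨E + a, by ring⟩
  have hbe : b < e := by linarith
  have hae : a ≤ e := by linarith
  set k := h a / (e - a)
  have hk0 : 0 < k := div_pos ha hE0
  have hline : k * (e - a) = h a := div_mul_cancel₀ _ hE0.ne'
  obtain ⟨c, hc, hlow, hupp⟩ := hconc.exists_crossing hab.le hline.le
  set v := k * (e - c)
  have hv0 : 0 < v := mul_pos hk0 (by linarith [hc.2])
  set r := α / β * v ^ (α - β) with hr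
  have hmono := monotoneOn_rpow_sub_mul_rpow hα hαβ hv0
  have hanti := antitoneOn_rpow_sub_mul_rpow hα hαβ hv0
  rw [← hr] at hmono hanti
  have hr0 : 0 < r := by positivity
  have hLα := intervalIntegrable_mul_sub_rpow (k := k) (e := e) hα.le
  have hLβ := intervalIntegrable_mul_sub_rpow (k := k) (e := e) hβ.le
  have hIα := hconc.intervalIntegrable_rpow hab.le hnn hα.le
  have hIβ := hconc.intervalIntegrable_rpow hab.le hnn hβ.le
  have hleft : ∫ t in a..b, (h t ^ α - r * h t ^ β) ≤
      ∫ t in a..b, ((k * (e - t)) ^ α - r * (k * (e - t)) ^ β) := by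
    refine intervalIntegral.integral_mono_ae_restrict hab.le (hIα.sub (hIβ.const_mul r))
      ((hLα _ _).sub ((hLβ _ _).const_mul r)) ?_
    filter_upwards [ae_restrict_mem measurableSet_Icc, ae_restrict_of_ae (Measure.ae_ne volume c)]
      with t ht htc
    rcases lt_or_gt_of_ne htc with htc | htc
    · have hvt : v ≤ k * (e - t) := mul_le_mul_of_nonneg_left (by linarith) hk0.le
      exact hanti hvt (hvt.trans (hlow t ⟨ht.1, htc⟩)) (hlow t ⟨ht.1, htc⟩)
    · have hvt : k * (e - t) ≤ v := mul_le_mul_of_nonneg_left (by linarith) hk0.le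
      have hht := hupp t ⟨htc, ht.2⟩
      exact hmono ⟨hnn t ht, hht.trans hvt⟩ ⟨(hnn t ht).trans hht, hvt⟩ hht
  have hright : 0 ≤ ∫ t in b..e, ((k * (e - t)) ^ α - r * (k * (e - t)) ^ β) := by
    refine intervalIntegral.integral_nonneg hbe.le fun t ht => ?_
    have h0 : 0 ≤ k * (e - t) := mul_nonneg hk0.le (sub_nonneg.2 ht.2)
    have hvt : k * (e - t) ≤ v := mul_le_mul_of_nonneg_left (by linarith [hc.2, ht.1]) hk0.le
    simpa [Real.zero_rpow hα.ne', Real.zero_rpow hβ.ne'] using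
      hmono ⟨le_rfl, hv0.le⟩ ⟨h0, hvt⟩ h0
  rw [intervalIntegral.integral_sub hIα (hIβ.const_mul r),
    intervalIntegral.integral_sub (hLα _ _) ((hLβ _ _).const_mul r),
    intervalIntegral.integral_const_mul, intervalIntegral.integral_const_mul] at hleft
  rw [intervalIntegral.integral_sub (hLα _ _) ((hLβ _ _).const_mul r),
    intervalIntegral.integral_const_mul] at hright
  have hsumα := intervalIntegral.integral_add_adjacent_intervals (hLα a b) (hLα b e)
  have hsumβ := intervalIntegral.integral_add_adjacent_intervals (hLβ a b) (hLβ b e)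
  have hval : ∀ p, k ^ p * (e - a) ^ (p + 1) / (p + 1) = h a ^ p * (e - a) / (p + 1) := fun p => by
    rw [Real.rpow_add_one hE0.ne', ← mul_assoc, ← Real.mul_rpow hk0.le hE0.le, hline]
  rw [integral_mul_sub_rpow hae hk0.le hα, hval] at hsumα
  rw [integral_mul_sub_rpow hae hk0.le hβ, hval] at hsumβ
  have hβE : ∫ t in a..b, h t ^ β ≤ h a ^ β * (e - a) / (β + 1) := by
    rw [div_lt_iff₀ hwβ] at hE
    rw [le_div_iff₀ (by linarith)]
    linarith
  have hfin : ∫ t in a..b, h t ^ α ≤ h a ^ α * (e - a) / (α + 1) := by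
    have := mul_le_mul_of_nonneg_left hβE hr0.le
    rw [← hsumβ] at this
    linarith
  rw [le_div_iff₀ (by linarith)] at hfin
  rw [div_le_iff₀ hwα]
  linarith

theorem integral_tail_le_of_le {a b k e p t : ℝ} {h : ℝ → ℝ}
    (hconc : ConcaveOn ℝ (Icc a b) h) (hnn : ∀ t ∈ Icc a b, 0 ≤ h t) (hp : 0 < p) (hk : 0 ≤ k)
    (hbe : b ≤ e) (hline : h a = k * (e - a))
    (hmass : ∫ u in a..b, h u ^ p = ∫ u in a..e, (k * (e - u)) ^ p) (ht : t ∈ Icc a b) :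
    ∫ u in t..b, h u ^ p ≤ ∫ u in t..e, (k * (e - u)) ^ p := by
  have hab : a ≤ b := ht.1.trans ht.2
  have hI := hconc.intervalIntegrable_rpow hab hnn hp.le
  have hI1 : IntervalIntegrable (fun u => h u ^ p) volume a t :=
    hI.mono_of_le le_rfl ht.1 ht.2
  have hI2 : IntervalIntegrable (fun u => h u ^ p) volume t b :=
    hI.mono_of_le ht.1 ht.2 le_rfl
  have hL := intervalIntegrable_mul_sub_rpow (k := k) (e := e) hp.le
  obtain ⟨c, hc, hlow, hupp⟩ := hconc.exists_crossing hab hline.ge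
  rcases le_total c t with hct | htc
  · have h1 : ∫ u in t..b, h u ^ p ≤ ∫ u in t..b, (k * (e - u)) ^ p :=
      intervalIntegral.integral_mono_on_of_le_Ioo ht.2 hI2 (hL _ _) fun u hu =>
        Real.rpow_le_rpow (hnn u ⟨ht.1.trans hu.1.le, hu.2.le⟩)
          (hupp u ⟨hct.trans_lt hu.1, hu.2.le⟩) hp.le
    have h2 : 0 ≤ ∫ u in b..e, (k * (e - u)) ^ p :=
      intervalIntegral.integral_nonneg hbe fun u hu =>
        Real.rpow_nonneg (mul_nonneg hk (sub_nonneg.2 hu.2)) p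
    have h3 := intervalIntegral.integral_add_adjacent_intervals (hL t b) (hL b e)
    linarith
  · have h1 : ∫ u in a..t, (k * (e - u)) ^ p ≤ ∫ u in a..t, h u ^ p :=
      intervalIntegral.integral_mono_on_of_le_Ioo ht.1 (hL _ _) hI1 fun u hu =>
        Real.rpow_le_rpow (mul_nonneg hk (by linarith [hu.2, ht.2]))
          (hlow u ⟨hu.1.le, hu.2.trans_le htc⟩) hp.le
    have h2 := intervalIntegral.integral_add_adjacent_intervals hI1 hI2
    have h3 := intervalIntegral.integral_add_adjacent_intervals (hL a t) (hL t e)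
    linarith

theorem integral_tail_le {a b g k e p t : ℝ} {h : ℝ → ℝ} (hg : g ∈ Ico a b)
    (hconc : ConcaveOn ℝ (Icc a b) h) (hnn : ∀ t ∈ Icc a b, 0 ≤ h t) (hp : 0 < p) (hk : 0 ≤ k)
    (hbe : b ≤ e) (hline : h g = k * (e - g))
    (hmass : ∫ u in g..b, h u ^ p = ∫ u in g..e, (k * (e - u)) ^ p) (ht : t ∈ Icc a b) :
    ∫ u in t..b, h u ^ p ≤ ∫ u in t..e, (k * (e - u)) ^ p := by
  have hgb : Icc g b ⊆ Icc a b := Icc_subset_Icc_left hg.1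
  have hconcg := hconc.subset hgb (convex_Icc g b)
  rcases le_or_gt g t with hgt | htg
  · exact integral_tail_le_of_le hconcg (fun u hu => hnn u (hgb hu)) hp hk hbe hline hmass
      ⟨hgt, ht.2⟩
  have hab : a ≤ b := ht.1.trans ht.2
  have hI := hconc.intervalIntegrable_rpow hab hnn hp.le
  have hI1 : IntervalIntegrable (fun u => h u ^ p) volume t g :=
    hI.mono_of_le ht.1 htg.le hg.2.le
  have hI2 : IntervalIntegrable (fun u => h u ^ p) volume g b :=
    hI.mono_of_le hg.1 hg.2.le le_rfl
  have hL := intervalIntegrable_mul_sub_rpow (k := k) (e := e) hp.le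
  obtain ⟨s, hs, hls⟩ : ∃ s ∈ Ioo g b, k * (e - s) ≤ h s := by
    by_contra! hcon
    have h1 := intervalIntegral.intervalIntegral_pos_of_pos_on ((hL g b).sub hI2)
      (fun u hu => sub_pos.2 (Real.rpow_lt_rpow (hnn u (hgb (Ioo_subset_Icc_self hu)))
        (hcon u hu) hp)) hg.2
    rw [intervalIntegral.integral_sub (hL g b) hI2] at h1
    have h2 : 0 ≤ ∫ u in b..e, (k * (e - u)) ^ p :=
      intervalIntegral.integral_nonneg hbe fun u hu =>
        Real.rpow_nonneg (mul_nonneg hk (sub_nonneg.2 hu.2)) p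
    have h3 := intervalIntegral.integral_add_adjacent_intervals (hL g b) (hL b e)
    linarith
  have hle : ∀ u ∈ Ioo t g, h u ≤ k * (e - u) := fun u hu => by
    have hua : u ∈ Icc a b := ⟨ht.1.trans hu.1.le, hu.2.le.trans hg.2.le⟩
    have h1 := hconc.slope_anti_adjacent hua (hgb (Ioo_subset_Icc_self hs)) hu.2 hs.1
    have h2 : -k ≤ (h s - h g) / (s - g) := by
      rw [le_div_iff₀ (sub_pos.2 hs.1), hline]
      linarith
    have h3 := h2.trans h1
    rw [le_div_iff₀ (sub_pos.2 hu.2), hline] at h3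
    linarith
  have h1 : ∫ u in t..g, h u ^ p ≤ ∫ u in t..g, (k * (e - u)) ^ p :=
    intervalIntegral.integral_mono_on_of_le_Ioo htg.le hI1 (hL _ _) fun u hu =>
      Real.rpow_le_rpow (hnn u ⟨ht.1.trans hu.1.le, hu.2.le.trans hg.2.le⟩) (hle u hu) hp.le
  have h2 := intervalIntegral.integral_add_adjacent_intervals hI1 hI2
  have h3 := intervalIntegral.integral_add_adjacent_intervals (hL t g) (hL g e)
  linarith

theorem continuousOn_integral_tail {a b : ℝ} {f : ℝ → ℝ} (hab : a ≤ b)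
    (hf : IntervalIntegrable f volume a b) :
    ContinuousOn (fun x => ∫ t in x..b, f t) (Icc a b) := by
  rw [← uIcc_of_le hab]
  exact intervalIntegral.continuousOn_primitive_interval_left
    (by rw [uIcc_of_le hab]; exact (intervalIntegrable_iff_integrableOn_Icc_of_le hab).1 hf)

theorem hasDerivAt_integral_tail {a b x : ℝ} {f : ℝ → ℝ} (hx : x ∈ Ioo a b)
    (hf : IntervalIntegrable f volume a b) (hcont : ContinuousOn f (Ioo a b)) :
    HasDerivAt (fun x => ∫ t in x..b, f t) (-f x) x := by
  exact intervalIntegral.integral_hasDerivAt_left (hf.mono_of_le hx.1.le hx.2.le le_rfl)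
    (hcont.stronglyMeasurableAtFilter isOpen_Ioo x hx) (hcont.continuousAt (isOpen_Ioo.mem_nhds hx))

theorem integral_tail_rpow_pos {a b x p : ℝ} {h : ℝ → ℝ}
    (hconc : ConcaveOn ℝ (Icc a b) h) (hnn : ∀ t ∈ Icc a b, 0 ≤ h t)
    (hpos : ∀ t ∈ Ioo a b, 0 < h t) (hp : 0 ≤ p) (hx : x ∈ Ico a b) :
    0 < ∫ t in x..b, h t ^ p :=
  intervalIntegral.intervalIntegral_pos_of_pos_on
    ((hconc.intervalIntegrable_rpow (hx.1.trans hx.2.le) hnn hp).mono_of_le hx.1 hx.2.le le_rfl)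
    (fun t ht => Real.rpow_pos_of_pos (hpos t ⟨hx.1.trans_lt ht.1, ht.2⟩) p) hx.2

theorem integral_tail_rpow_mul_rpow {a b p : ℝ} {h : ℝ → ℝ} (hab : a < b)
    (hconc : ConcaveOn ℝ (Icc a b) h) (hnn : ∀ t ∈ Icc a b, 0 ≤ h t) (hp : 0 < p) :
    ∫ t in a..b, (∫ u in t..b, h u ^ p) ^ (1 / (p + 1)) * h t ^ p =
      (p + 1) / (p + 2) * ((∫ t in a..b, h t ^ p) ^ (1 / (p + 1)) * ∫ t in a..b, h t ^ p) := by
  have hI := hconc.intervalIntegrable_rpow hab.le hnn hp.le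
  have hTcont := continuousOn_integral_tail hab.le hI
  have hq : 0 < 1 / (p + 1) := by positivity
  have hI0 : 0 ≤ ∫ t in a..b, h t ^ p :=
    intervalIntegral.integral_nonneg hab.le fun t ht => Real.rpow_nonneg (hnn t ht) p
  have key := intervalIntegral.integral_eq_sub_of_hasDerivAt_of_le hab.le
    (f := fun x => -((p + 1) / (p + 2)) * (∫ u in x..b, h u ^ p) ^ (1 / (p + 1) + 1))
    (f' := fun x => (∫ u in x..b, h u ^ p) ^ (1 / (p + 1)) * h x ^ p)
    (continuousOn_const.mul (hTcont.rpow_const fun _ _ => Or.inr (by positivity)))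
    (fun x hx => by
      have hd := ((hasDerivAt_integral_tail hx hI (hconc.continuousOn_rpow_Ioo hp.le)).rpow_const
        (p := 1 / (p + 1) + 1) (Or.inr (by linarith))).const_mul (-((p + 1) / (p + 2)))
      refine hd.congr_deriv ?_
      rw [add_sub_cancel_right]
      field_simp
      ring)
    (hI.continuousOn_mul (by
      rw [uIcc_of_le hab.le]; exact hTcont.rpow_const fun _ _ => Or.inr hq.le))
  rw [key, intervalIntegral.integral_same, Real.zero_rpow (by positivity),
    Real.rpow_add_one' hI0 (by positivity)]
  ring

theorem centroid_mem_Ioo {a b g : ℝ} {f : ℝ → ℝ} (hab : a < b)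
    (hf : IntervalIntegrable f volume a b) (hpos : ∀ t ∈ Ioo a b, 0 < f t)
    (hg : ∫ t in a..b, t * f t = g * ∫ t in a..b, f t) : g ∈ Ioo a b := by
  have hI0 := intervalIntegral.intervalIntegral_pos_of_pos_on hf hpos hab
  have htf : IntervalIntegrable (fun t => t * f t) volume a b :=
    hf.continuousOn_mul continuousOn_id
  have h1 := intervalIntegral.intervalIntegral_pos_of_pos_on (htf.sub (hf.const_mul a))
    (fun t ht => by nlinarith [mul_pos (sub_pos.2 ht.1) (hpos t ht)]) hab
  have h2 := intervalIntegral.intervalIntegral_pos_of_pos_on ((hf.const_mul b).sub htf)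
    (fun t ht => by nlinarith [mul_pos (sub_pos.2 ht.2) (hpos t ht)]) hab
  rw [intervalIntegral.integral_sub htf (hf.const_mul a), intervalIntegral.integral_const_mul, hg,
    ← sub_mul] at h1
  rw [intervalIntegral.integral_sub (hf.const_mul b) htf, intervalIntegral.integral_const_mul, hg,
    ← sub_mul] at h2
  exact ⟨sub_pos.1 (pos_of_mul_pos_left h1 hI0.le), sub_pos.1 (pos_of_mul_pos_left h2 hI0.le)⟩

/-- The Grünbaum inequality for the measure with density `h ^ p`, where `h` is concave. -/
theorem gruenbaum_rpow {a b g p : ℝ} {h : ℝ → ℝ} (hab : a < b)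
    (hconc : ConcaveOn ℝ (Icc a b) h) (hnn : ∀ t ∈ Icc a b, 0 ≤ h t)
    (hpos : ∀ t ∈ Ioo a b, 0 < h t) (hp : 0 < p)
    (hg : ∫ t in a..b, t * h t ^ p = g * ∫ t in a..b, h t ^ p) :
    ((p + 1) / (p + 2)) ^ (p + 1) * ∫ t in a..b, h t ^ p ≤ ∫ t in g..b, h t ^ p := by
  have hI := hconc.intervalIntegrable_rpow hab.le hnn hp.le
  have hgm := centroid_mem_Ioo hab hI (fun t ht => Real.rpow_pos_of_pos (hpos t ht) p) hg
  have hI0 := integral_tail_rpow_pos hconc hnn hpos hp.le ⟨le_rfl, hab⟩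
  have hT0 := integral_tail_rpow_pos hconc hnn hpos hp.le ⟨hgm.1.le, hgm.2⟩
  have hw := hpos g hgm
  have hwp := Real.rpow_pos_of_pos hw p
  have hgb : Icc g b ⊆ Icc a b := Icc_subset_Icc_left hgm.1.le
  have hle := rpow_mul_le_integral hgm.2 (hconc.subset hgb (convex_Icc g b))
    (fun t ht => hnn t (hgb ht)) hp
  set T := ∫ t in g..b, h t ^ p
  set I := ∫ t in a..b, h t ^ p with hIdef
  obtain ⟨e, he⟩ : ∃ e, e - g = (p + 1) * T / h g ^ p := ⟨_ + g, add_sub_cancel_right _ _⟩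
  have hbe : b ≤ e := by
    rw [mul_comm, ← le_div_iff₀ hwp, ← he] at hle
    linarith
  have hge : 0 < e - g := by linarith [hgm.2]
  set k := h g / (e - g)
  have hk0 : 0 < k := div_pos hw hge
  have hline : h g = k * (e - g) := (div_mul_cancel₀ _ hge.ne').symm
  have hmass' : T = k ^ p * (e - g) ^ (p + 1) / (p + 1) := by
    rw [Real.rpow_add_one hge.ne', ← mul_assoc, ← Real.mul_rpow hk0.le hge.le, ← hline, he]
    field_simp
  have hmass : T = ∫ u in g..e, (k * (e - u)) ^ p := by
    rw [integral_mul_sub_rpow (by linarith) hk0.le hp, hmass']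
  have hq : 0 < 1 / (p + 1) := by positivity
  have hTcont := continuousOn_integral_tail hab.le hI
  have hbound : ∀ t ∈ Icc a b, (∫ u in t..b, h u ^ p) ^ (1 / (p + 1)) ≤
      T ^ (1 / (p + 1)) * ((e - t) / (e - g)) := fun t ht => by
    have h1 := integral_tail_le ⟨hgm.1.le, hgm.2⟩ hconc hnn hp hk0.le hbe hline hmass ht
    have het : 0 ≤ e - t := by linarith [ht.2]
    have h0 : 0 ≤ ∫ u in t..b, h u ^ p := intervalIntegral.integral_nonneg ht.2 fun u hu =>
      Real.rpow_nonneg (hnn u ⟨ht.1.trans hu.1, hu.2⟩) p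
    have hge' := Real.rpow_pos_of_pos hge (p + 1)
    rw [integral_mul_sub_rpow (by linarith) hk0.le hp, show k ^ p * (e - t) ^ (p + 1) / (p + 1) =
      T * ((e - t) / (e - g)) ^ (p + 1) by
        rw [hmass', Real.div_rpow het hge.le]; field_simp] at h1
    refine (Real.rpow_le_rpow h0 h1 hq.le).trans_eq ?_
    have hr : 0 ≤ (e - t) / (e - g) := div_nonneg het hge.le
    rw [Real.mul_rpow hT0.le (Real.rpow_nonneg hr _), ← Real.rpow_mul hr,
      mul_one_div_cancel (by linarith), Real.rpow_one]
  have htf : IntervalIntegrable (fun t => t * h t ^ p) volume a b :=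
    hI.continuousOn_mul continuousOn_id
  have hint : ∫ t in a..b, (∫ u in t..b, h u ^ p) ^ (1 / (p + 1)) * h t ^ p ≤
      ∫ t in a..b, T ^ (1 / (p + 1)) / (e - g) * (e * h t ^ p - t * h t ^ p) := by
    refine intervalIntegral.integral_mono_on hab.le (hI.continuousOn_mul (by
      rw [uIcc_of_le hab.le]; exact hTcont.rpow_const fun _ _ => Or.inr hq.le))
      (((hI.const_mul e).sub htf).const_mul _) fun t ht => ?_
    refine (mul_le_mul_of_nonneg_right (hbound t ht) (Real.rpow_nonneg (hnn t ht) p)).trans_eq ?_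
    ring
  rw [integral_tail_rpow_mul_rpow hab hconc hnn hp, intervalIntegral.integral_const_mul,
    intervalIntegral.integral_sub (hI.const_mul e) htf, intervalIntegral.integral_const_mul, hg,
    ← hIdef, ← sub_mul, ← mul_assoc, ← mul_assoc, div_mul_cancel₀ _ hge.ne',
    mul_le_mul_iff_left₀ hI0] at hint
  have hfin := Real.rpow_le_rpow (by positivity) hint (by positivity : 0 ≤ p + 1)
  rwa [Real.mul_rpow (by positivity) (by positivity), ← Real.rpow_mul hI0.le,
    ← Real.rpow_mul hT0.le, one_div_mul_cancel (by linarith), Real.rpow_one, Real.rpow_one] at hfin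

/-- The normalised tails `(∫ₓᵇ hᵖ / ∫ₐᵇ hᵖ) ^ (1 / (p + 1))` are monotone in `p`. -/
theorem log_tail_ratio_div_le {a b x α β : ℝ} {h : ℝ → ℝ}
    (hconc : ConcaveOn ℝ (Icc a b) h) (hnn : ∀ t ∈ Icc a b, 0 ≤ h t)
    (hpos : ∀ t ∈ Ioo a b, 0 < h t) (hα : 0 < α) (hαβ : α ≤ β) (hx : x ∈ Ico a b) :
    Real.log ((∫ t in x..b, h t ^ α) / ∫ t in a..b, h t ^ α) / (α + 1) ≤
      Real.log ((∫ t in x..b, h t ^ β) / ∫ t in a..b, h t ^ β) / (β + 1) := by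
  have hβ := hα.trans_le hαβ
  have hab : a < b := hx.1.trans_lt hx.2
  have hsub : Icc a x ⊆ Icc a b := Icc_subset_Icc_right hx.2.le
  have hTpos : ∀ p : ℝ, 0 < p → ∀ t ∈ Icc a x, 0 < ∫ u in t..b, h u ^ p := fun p hp t ht =>
    integral_tail_rpow_pos hconc hnn hpos hp.le ⟨ht.1, ht.2.trans_lt hx.2⟩
  have hcont : ∀ p, 0 < p → ContinuousOn
      (fun t => Real.log (∫ u in t..b, h u ^ p) / (p + 1)) (Icc a x) := fun p hp =>
    (((continuousOn_integral_tail hab.le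
      (hconc.intervalIntegrable_rpow hab.le hnn hp.le)).mono hsub).log
        fun t ht => (hTpos p hp t ht).ne').div_const _
  have hderiv : ∀ p, 0 < p → ∀ t ∈ Ioo a x, HasDerivAt
      (fun t => Real.log (∫ u in t..b, h u ^ p) / (p + 1))
      (-h t ^ p / (∫ u in t..b, h u ^ p) / (p + 1)) t := fun p hp t ht =>
    ((hasDerivAt_integral_tail ⟨ht.1, ht.2.trans hx.2⟩
      (hconc.intervalIntegrable_rpow hab.le hnn hp.le) (hconc.continuousOn_rpow_Ioo hp.le)).log
        (hTpos p hp t (Ioo_subset_Icc_self ht)).ne').div_const _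
  have hmono : MonotoneOn (fun t => Real.log (∫ u in t..b, h u ^ β) / (β + 1) -
      Real.log (∫ u in t..b, h u ^ α) / (α + 1)) (Icc a x) := by
    refine monotoneOn_of_hasDerivWithinAt_nonneg (convex_Icc a x)
      ((hcont β hβ).sub (hcont α hα)) (f' := fun t => -h t ^ β / (∫ u in t..b, h u ^ β) / (β + 1) -
        -h t ^ α / (∫ u in t..b, h u ^ α) / (α + 1)) (fun t ht => ?_) (fun t ht => ?_)
    all_goals rw [interior_Icc] at ht
    · exact ((hderiv β hβ t ht).sub (hderiv α hα t ht)).hasDerivWithinAt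
    · have htb : t < b := ht.2.trans hx.2
      have hsubt : Icc t b ⊆ Icc a b := Icc_subset_Icc_left ht.1.le
      have key := rpow_mul_integral_rpow_le htb (hconc.subset hsubt (convex_Icc t b))
        (fun u hu => hnn u (hsubt hu)) (hpos t ⟨ht.1, htb⟩) hα hαβ
      have hTα := hTpos α hα t (Ioo_subset_Icc_self ht)
      have hTβ := hTpos β hβ t (Ioo_subset_Icc_self ht)
      have : h t ^ β / ((β + 1) * ∫ u in t..b, h u ^ β) ≤
          h t ^ α / ((α + 1) * ∫ u in t..b, h u ^ α) :=
        (div_le_div_iff₀ (by positivity) (by positivity)).2 key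
      rw [sub_nonneg, div_div, div_div, neg_div, neg_div, neg_le_neg_iff, mul_comm _ (β + 1),
        mul_comm _ (α + 1)]
      exact this
  have := hmono (left_mem_Icc.2 hx.1) (right_mem_Icc.2 hx.1) hx.1
  rw [Real.log_div (hTpos α hα x (right_mem_Icc.2 hx.1)).ne'
      (hTpos α hα a (left_mem_Icc.2 hx.1)).ne',
    Real.log_div (hTpos β hβ x (right_mem_Icc.2 hx.1)).ne'
      (hTpos β hβ a (left_mem_Icc.2 hx.1)).ne', sub_div, sub_div]
  linarith

theorem stmt_1 (a b α β : ℝ) (h : ℝ → ℝ) (hab : a < b)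
    (hconc : ConcaveOn ℝ (Set.Icc a b) h)
    (hnn : ∀ t ∈ Set.Icc a b, 0 ≤ h t)
    (hint : 0 < ∫ t in a..b, h t)
    (hα : 0 < α) (hβ : 0 < β) (hαβ : α ≤ β) :
    (∫ t in ((∫ t in a..b, t * h t ^ α) / ∫ t in a..b, h t ^ α)..b, h t ^ β) /
      (∫ t in a..b, h t ^ β) ≥ ((α + 1) / (α + 2)) ^ (β + 1) := by
  have hpos := hconc.pos_of_integral_pos hab hnn hint
  have hIα := integral_tail_rpow_pos hconc hnn hpos hα.le ⟨le_rfl, hab⟩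
  have hIβ := integral_tail_rpow_pos hconc hnn hpos hβ.le ⟨le_rfl, hab⟩
  set g := (∫ t in a..b, t * h t ^ α) / ∫ t in a..b, h t ^ α
  have hg : ∫ t in a..b, t * h t ^ α = g * ∫ t in a..b, h t ^ α :=
    (div_mul_cancel₀ _ hIα.ne').symm
  have hgm := centroid_mem_Ioo hab (hconc.intervalIntegrable_rpow hab.le hnn hα.le)
    (fun t ht => Real.rpow_pos_of_pos (hpos t ht) α) hg
  have hgm' : g ∈ Ico a b := ⟨hgm.1.le, hgm.2⟩
  have hTβ := integral_tail_rpow_pos hconc hnn hpos hβ.le hgm'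
  have hgr := gruenbaum_rpow hab hconc hnn hpos hα hg
  rw [← le_div_iff₀ hIα] at hgr
  have hlog := Real.log_le_log (by positivity) hgr
  rw [Real.log_rpow (by positivity), mul_comm, ← le_div_iff₀ (by linarith)] at hlog
  have hfin := hlog.trans (log_tail_ratio_div_le hconc hnn hpos hα hαβ hgm')
  rw [le_div_iff₀ (by linarith), mul_comm, ← Real.log_rpow (by positivity)] at hfin
  exact (Real.log_le_log_iff (by positivity) (div_pos hTβ hIβ)).1 hfin
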